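/- Fix an integer n ≥ 2 and positive real numbers p(k,j) > 0 for k ∈ {1,…,n} and integers j ≥ 1, and assume there is a constant C > 0 such that |log p(k,j)| ≤ C·j for all k and j. For q ≥ 1 set D_{q+1} = ∏_{j=1}^{q} s_j. Then for each k the series E_n(k) := Σ_{j=1}^∞ (log p(k,j))/n^j converges absolutely, and lim_{q→∞} (log D_{q+1})/(q·n^q) = ((n−1)/n) · Σ_{k=1}^n E_n(k). -/

import Mathlib

open Filter

/-- The weight `t(w)` of a word `w` over the alphabet `Fin n`: if
`w = i₁^{j₁} i₂^{j₂} ⋯ i_m^{j_m}` is the run decomposition of `w`, then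
`t(w) = ∏_t p (i_t) (j_t)`. -/
noncomputable def runProd {n : ℕ} (p : Fin n → ℕ → ℝ) (w : List (Fin n)) : ℝ :=
  ((w.splitBy (· == ·)).map (fun r =>
    match r with
    | [] => 1
    | a :: t => p a (t.length + 1))).prod

/-- `sWord n p q = ∏_w t(w)`, the product over all `n^q` words `w` of length `q`. -/
noncomputable def sWord (n : ℕ) (p : Fin n → ℕ → ℝ) (q : ℕ) : ℝ :=
  ∏ f : Fin q → Fin n, runProd p (List.ofFn f)

/-!
Prepending a letter `a` to a word whose leading run of `a`s has length `r` changes its weight by the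
factor `p a (r + 1) / p a r`, where `p a 0 = 1`. Among the words of length `q`, the proportion with
`r = j` is `(n - 1) / n ^ (j + 1)` for `j < q`. Hence `log s_{q+1} / n ^ (q + 1) - log s_q / n ^ q`
tends to `∑ₐ (n - 1) / n * ∑ⱼ (log p a (j + 1) - log p a j) / n ^ (j + 1)`, which summation by parts
turns into `((n - 1) / n) ^ 2 * ∑ₐ E_n(a)`. Two applications of the Stolz–Cesàro theorem pass from
these increments first to `log s_q / (q * n ^ q)` and then to `log D_{q+1} / (q * n ^ q)`; the
second contributes a factor `n / (n - 1)`.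
-/

open Asymptotics Topology

section Sequences

/-- The **Stolz–Cesàro theorem**. -/
theorem tendsto_div_of_tendsto_sub_div_sub {a b : ℕ → ℝ} {l : ℝ} (hb : StrictMono b)
    (hb_top : Tendsto b atTop atTop)
    (h : Tendsto (fun q => (a (q + 1) - a q) / (b (q + 1) - b q)) atTop (𝓝 l)) :
    Tendsto (fun q => a q / b q) atTop (𝓝 l) := by
  have hpos (q : ℕ) : 0 < b (q + 1) - b q := sub_pos.2 (hb q.lt_succ_self)
  have hincr : (fun q => (a (q + 1) - a q) - l * (b (q + 1) - b q)) =o[atTop]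
      fun q => b (q + 1) - b q := by
    refine (isLittleO_iff_tendsto fun _ hq => absurd hq (hpos _).ne').2 ?_
    refine (tendsto_sub_nhds_zero_iff.2 h).congr fun q => ?_
    rw [sub_div _ (l * _), mul_div_cancel_right₀ _ (hpos q).ne']
  have hconst (c : ℝ) : (fun _ => c) =o[atTop] b :=
    isLittleO_const_left.2 (Or.inr (tendsto_norm_atTop_atTop.comp hb_top))
  have hsum := hincr.sum_range (fun q => (hpos q).le) <| by
    simpa only [Finset.sum_range_sub, ← sub_eq_add_neg] using
      tendsto_atTop_add_const_right _ (-b 0) hb_top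
  simp only [Finset.sum_sub_distrib _ fun _ => l * _, ← Finset.mul_sum,
    Finset.sum_range_sub] at hsum
  have hdiff : (fun q => a q - l * b q) =o[atTop] b := by
    refine ((hsum.trans_isBigO ((isBigO_refl b _).sub (hconst (b 0)).isBigO)).add
      (hconst (a 0 - l * b 0))).congr_left fun q => ?_
    ring
  refine tendsto_sub_nhds_zero_iff.1 (hdiff.tendsto_div_nhds_zero.congr' ?_)
  filter_upwards [hb_top.eventually_ne_atTop 0] with q hq
  rw [sub_div, mul_div_cancel_right₀ _ hq]

theorem tendsto_sum_Icc_div_mul_pow {x c : ℝ} (hx : 1 < x) {u : ℕ → ℝ}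
    (hu : Tendsto (fun q : ℕ => u q / (q * x ^ q)) atTop (𝓝 c)) :
    Tendsto (fun q : ℕ => (∑ j ∈ Finset.Icc 1 q, u j) / (q * x ^ q)) atTop
      (𝓝 (c * (x / (x - 1)))) := by
  have hx_pos : 0 < x := one_pos.trans hx
  have hincr_pos (q : ℕ) : 0 < (q + 1) * x - q := by
    nlinarith [(Nat.cast_nonneg q : (0 : ℝ) ≤ q)]
  have hincr (q : ℕ) : ((q + 1 : ℕ) : ℝ) * x ^ (q + 1) - q * x ^ q = x ^ q * ((q + 1) * x - q) := by
    push_cast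
    ring
  have hratio : Tendsto (fun q : ℕ => x / (x - q / (q + 1))) atTop (𝓝 (x / (x - 1))) :=
    tendsto_const_nhds.div (tendsto_const_nhds.sub (tendsto_natCast_div_add_atTop 1))
      (sub_pos.2 hx).ne'
  refine tendsto_div_of_tendsto_sub_div_sub (strictMono_nat_of_lt_succ fun q => ?_)
    (tendsto_natCast_atTop_atTop.atTop_mul_atTop₀ (tendsto_pow_atTop_atTop_of_one_lt hx))
    (((hu.comp (tendsto_add_atTop_nat 1)).mul hratio).congr fun q => ?_)
  · exact sub_pos.1 (hincr q ▸ mul_pos (pow_pos hx_pos q) (hincr_pos q))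
  · have hq : (q : ℝ) + 1 ≠ 0 := by positivity
    have hden : x - q / (q + 1) = ((q + 1) * x - q) / (q + 1) := by field_simp
    have hne := (hincr_pos q).ne'
    rw [hincr, Finset.sum_Icc_succ_top (by omega), add_sub_cancel_left, hden]
    simp only [Function.comp_apply, Nat.cast_add, Nat.cast_one, pow_succ]
    field_simp

theorem summable_abs_div_pow_of_abs_le_mul {x C : ℝ} (hx : 1 < x) {u : ℕ → ℝ}
    (hu : ∀ j, 1 ≤ j → |u j| ≤ C * j) :
    Summable fun j : ℕ => |u (j + 1)| / x ^ (j + 1) := by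
  have hx_pos : 0 < x := one_pos.trans hx
  have hinv : ‖x⁻¹‖ < 1 := by
    simpa only [norm_inv, Real.norm_of_nonneg hx_pos.le] using inv_lt_one_of_one_lt₀ hx
  have hgeom : Summable fun j : ℕ => C * (j / x ^ j) := by
    simpa only [pow_one, inv_pow, ← div_eq_mul_inv] using
      (summable_pow_mul_geometric_of_norm_lt_one 1 hinv).mul_left C
  refine .of_nonneg_of_le (fun j => by positivity) (fun j => ?_) ((summable_nat_add_iff 1).2 hgeom)
  rw [← mul_div_assoc]
  gcongr
  exact hu (j + 1) (Nat.le_add_left 1 j)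

theorem hasSum_sub_div_pow {x : ℝ} (hx : x ≠ 0) {u : ℕ → ℝ} (hu0 : u 0 = 0)
    (hu : Summable fun j : ℕ => u (j + 1) / x ^ (j + 1)) :
    HasSum (fun j : ℕ => (u (j + 1) - u j) / x ^ (j + 1))
      ((x - 1) / x * ∑' j : ℕ, u (j + 1) / x ^ (j + 1)) := by
  have hshift : HasSum (fun j : ℕ => u j / x ^ j) (∑' j : ℕ, u (j + 1) / x ^ (j + 1)) := by
    simpa [hu0] using (hasSum_nat_add_iff (f := fun j : ℕ => u j / x ^ j) 1).1 hu.hasSum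
  have hlim : (x - 1) / x * ∑' j : ℕ, u (j + 1) / x ^ (j + 1) =
      (∑' j : ℕ, u (j + 1) / x ^ (j + 1)) - (∑' j : ℕ, u (j + 1) / x ^ (j + 1)) / x := by
    field_simp
  rw [hlim]
  refine (hu.hasSum.sub (hshift.div_const x)).congr_fun fun j => ?_
  rw [sub_div, div_div, ← pow_succ]

end Sequences

section LeadingRun

variable {α : Type*}

theorem sum_comp_ofFn_succ [Fintype α] {M : Type*} [AddCommMonoid M] (q : ℕ) (F : List α → M) :
    ∑ f : Fin (q + 1) → α, F (List.ofFn f) = ∑ a, ∑ f : Fin q → α, F (a :: List.ofFn f) := by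
  rw [← (Fin.consEquiv fun _ => α).sum_comp, Fintype.sum_prod_type]
  simp [Fin.consEquiv, List.ofFn_succ]

variable [DecidableEq α]

/-- The number of copies of the letter `a` at the start of the word `w`; it is `0` if `w` does not
start with `a`. -/
def leadingRun (a : α) (w : List α) : ℕ :=
  (w.takeWhile (· == a)).length

theorem leadingRun_cons (a b : α) (w : List α) :
    leadingRun a (b :: w) = if b = a then leadingRun a w + 1 else 0 := by
  by_cases h : b = a <;> simp [leadingRun, h]

theorem replicate_leadingRun_append_dropWhile (a : α) (w : List α) :
    List.replicate (leadingRun a w) a ++ w.dropWhile (· == a) = w := by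
  have htake : w.takeWhile (· == a) = List.replicate (leadingRun a w) a :=
    List.eq_replicate_iff.2 ⟨rfl, fun b hb => by simpa using List.mem_takeWhile_imp hb⟩
  rw [← htake, List.takeWhile_append_dropWhile]

variable [Fintype α]

theorem sum_leadingRun_div_pow {K : Type*} [Field K] [CharZero K] (a : α) (q : ℕ) (g : ℕ → K) :
    (∑ f : Fin q → α, g (leadingRun a (List.ofFn f))) / (Fintype.card α : K) ^ q =
      g q / (Fintype.card α : K) ^ q +
        (Fintype.card α - 1) * ∑ j ∈ Finset.range q, g j / (Fintype.card α : K) ^ (j + 1) := by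
  have : Nonempty α := ⟨a⟩
  have hcard : (Fintype.card α : K) ≠ 0 := Nat.cast_ne_zero.2 Fintype.card_ne_zero
  induction q generalizing g with
  | zero => simp [leadingRun]
  | succ q ih =>
    have hfirst : ∑ f : Fin (q + 1) → α, g (leadingRun a (List.ofFn f)) =
        ∑ f : Fin q → α, g (leadingRun a (List.ofFn f) + 1) +
          (Fintype.card α - 1) * Fintype.card α ^ q * g 0 := by
      rw [sum_comp_ofFn_succ q fun w => g (leadingRun a w),
        ← Finset.add_sum_erase _ _ (Finset.mem_univ a)]
      have hne : ∀ b ∈ Finset.univ.erase a,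
          ∑ f : Fin q → α, g (leadingRun a (b :: List.ofFn f)) = Fintype.card α ^ q * g 0 := by
        intro b hb
        simp [leadingRun_cons, Finset.ne_of_mem_erase hb]
      rw [Finset.sum_congr rfl hne, Finset.sum_const, Finset.card_erase_of_mem (Finset.mem_univ a),
        Finset.card_univ, nsmul_eq_mul, Nat.cast_pred Fintype.card_pos]
      simp [leadingRun_cons, mul_assoc]
    have hshift := ih fun j => g (j + 1)
    rw [hfirst, add_div, pow_succ, ← div_div, hshift, Finset.sum_range_succ', mul_add,
      Finset.mul_sum, Finset.mul_sum, add_div, Finset.sum_div]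
    simp only [pow_succ]
    field_simp
    ring

theorem tendsto_sum_leadingRun_div_pow (a : α) {g : ℕ → ℝ} {s : ℝ}
    (hg : HasSum (fun j : ℕ => g j / (Fintype.card α : ℝ) ^ (j + 1)) s) :
    Tendsto (fun q : ℕ =>
        (∑ f : Fin q → α, g (leadingRun a (List.ofFn f))) / (Fintype.card α : ℝ) ^ q) atTop
      (𝓝 ((Fintype.card α - 1) * s)) := by
  have : Nonempty α := ⟨a⟩
  have hcard : (Fintype.card α : ℝ) ≠ 0 := Nat.cast_ne_zero.2 Fintype.card_ne_zero
  have hlast : Tendsto (fun q : ℕ => g q / (Fintype.card α : ℝ) ^ q) atTop (𝓝 0) := by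
    rw [← mul_zero (Fintype.card α : ℝ)]
    refine (hg.summable.tendsto_atTop_zero.const_mul _).congr fun q => ?_
    rw [pow_succ]
    field_simp
  simpa only [sum_leadingRun_div_pow, zero_add] using
    hlast.add (hg.tendsto_sum_nat.const_mul ((Fintype.card α : ℝ) - 1))

end LeadingRun

section RunProd

variable {n : ℕ} {p : Fin n → ℕ → ℝ}

theorem runProd_congr {p' : Fin n → ℕ → ℝ} (h : ∀ k j, 1 ≤ j → p k j = p' k j) :
    runProd p = runProd p' := by
  funext w
  refine congrArg List.prod (List.map_congr_left fun r _ => ?_)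
  cases r with
  | nil => rfl
  | cons a t => exact h a _ (Nat.le_add_left 1 _)

theorem runProd_ne_zero (hp : ∀ k j, 1 ≤ j → p k j ≠ 0) (w : List (Fin n)) : runProd p w ≠ 0 := by
  refine List.prod_ne_zero fun hmem => ?_
  obtain ⟨r, -, hr⟩ := List.mem_map.1 hmem
  cases r with
  | nil => exact one_ne_zero hr
  | cons a t => exact hp a _ (Nat.le_add_left 1 _) hr

theorem runProd_replicate {a : Fin n} (hp_zero : p a 0 = 1) (m : ℕ) :
    runProd p (List.replicate m a) = p a m := by
  cases m with
  | zero => simp [runProd, hp_zero]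
  | succ m =>
    rw [runProd, List.splitBy_of_isChain (by simp) (List.isChain_replicate_of_rel _ (by simp))]
    simp [List.replicate_succ]

theorem runProd_replicate_append {a : Fin n} (hp_zero : p a 0 = 1) (m : ℕ)
    {w : List (Fin n)} (hw : ∀ b ∈ w.head?, b ≠ a) :
    runProd p (List.replicate m a ++ w) = p a m * runProd p w := by
  have hsplit : ∀ x ∈ (List.replicate m a).getLast?, ∀ y ∈ w.head?, (x == y) = false := by
    intro x hx y hy
    have hxa : x = a := List.eq_of_mem_replicate (List.mem_of_mem_getLast? hx)
    simpa [hxa] using (hw y hy).symm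
  rw [runProd, List.splitBy_append hsplit, List.map_append, List.prod_append, ← runProd,
    ← runProd, runProd_replicate hp_zero]

theorem log_runProd_cons {a : Fin n} (hp_zero : p a 0 = 1) (hp : ∀ k j, 1 ≤ j → p k j ≠ 0)
    (w : List (Fin n)) :
    Real.log (runProd p (a :: w)) = Real.log (runProd p w) +
      (Real.log (p a (leadingRun a w + 1)) - Real.log (p a (leadingRun a w))) := by
  set v := w.dropWhile (· == a)
  have hv : ∀ b ∈ v.head?, b ≠ a := fun b hb => by
    simpa [v, Option.mem_def.1 hb] using List.head?_dropWhile_not (· == a) w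
  have hw : w = List.replicate (leadingRun a w) a ++ v :=
    (replicate_leadingRun_append_dropWhile a w).symm
  have haw : a :: w = List.replicate (leadingRun a w + 1) a ++ v := by
    rw [List.replicate_succ, List.cons_append, ← hw]
  have hp_ne (m : ℕ) : p a m ≠ 0 := by
    rcases Nat.eq_zero_or_pos m with rfl | hm
    · simp [hp_zero]
    · exact hp a m hm
  have hlog (m : ℕ) : Real.log (runProd p (List.replicate m a ++ v)) =
      Real.log (p a m) + Real.log (runProd p v) := by
    rw [runProd_replicate_append hp_zero m hv,
      Real.log_mul (hp_ne m) (runProd_ne_zero hp v)]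
  have hlog_w := hlog (leadingRun a w)
  rw [← hw] at hlog_w
  rw [haw, hlog, hlog_w]
  ring

theorem sWord_ne_zero (hp : ∀ k j, 1 ≤ j → p k j ≠ 0) (q : ℕ) : sWord n p q ≠ 0 :=
  Finset.prod_ne_zero_iff.2 fun _ _ => runProd_ne_zero hp _

theorem log_sWord (hp : ∀ k j, 1 ≤ j → p k j ≠ 0) (q : ℕ) :
    Real.log (sWord n p q) = ∑ f : Fin q → Fin n, Real.log (runProd p (List.ofFn f)) :=
  Real.log_prod fun _ _ => runProd_ne_zero hp _

theorem log_sWord_succ (hp_zero : ∀ k, p k 0 = 1) (hp : ∀ k j, 1 ≤ j → p k j ≠ 0) (q : ℕ) :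
    Real.log (sWord n p (q + 1)) = n * Real.log (sWord n p q) +
      ∑ a, ∑ f : Fin q → Fin n, (Real.log (p a (leadingRun a (List.ofFn f) + 1)) -
        Real.log (p a (leadingRun a (List.ofFn f)))) := by
  rw [log_sWord hp, log_sWord hp, sum_comp_ofFn_succ q fun w => Real.log (runProd p w)]
  simp only [log_runProd_cons (hp_zero _) hp, Finset.sum_add_distrib, Finset.sum_const,
    Finset.card_univ, Fintype.card_fin, nsmul_eq_mul]

theorem tendsto_log_sWord_succ_sub (hn : n ≠ 0) (hp_zero : ∀ k, p k 0 = 1)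
    (hp : ∀ k j, 1 ≤ j → p k j ≠ 0)
    (hsum : ∀ k, Summable fun j : ℕ => Real.log (p k (j + 1)) / (n : ℝ) ^ (j + 1)) :
    Tendsto (fun q : ℕ => Real.log (sWord n p (q + 1)) / (n : ℝ) ^ (q + 1) -
        Real.log (sWord n p q) / (n : ℝ) ^ q) atTop
      (𝓝 ((((n : ℝ) - 1) / n) ^ 2 *
        ∑ k, ∑' j : ℕ, Real.log (p k (j + 1)) / (n : ℝ) ^ (j + 1))) := by
  have hn' : (n : ℝ) ≠ 0 := Nat.cast_ne_zero.2 hn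
  have hletter (a : Fin n) := tendsto_sum_leadingRun_div_pow a <| by
    simpa only [Fintype.card_fin] using
      hasSum_sub_div_pow hn' (u := fun j => Real.log (p a j)) (by simp [hp_zero]) (hsum a)
  simp only [Fintype.card_fin] at hletter
  convert (tendsto_finsetSum Finset.univ fun a _ => hletter a).div_const (n : ℝ) using 1
  · ext q
    rw [log_sWord_succ hp_zero hp, ← Finset.sum_div]
    field_simp
    ring
  · rw [← Finset.mul_sum, ← Finset.mul_sum]
    congr 1
    field_simp

theorem tendsto_log_sWord_div (hn : n ≠ 0) (hp : ∀ k j, 1 ≤ j → p k j ≠ 0)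
    (hsum : ∀ k, Summable fun j : ℕ => Real.log (p k (j + 1)) / (n : ℝ) ^ (j + 1)) :
    Tendsto (fun q : ℕ => Real.log (sWord n p q) / (q * (n : ℝ) ^ q)) atTop
      (𝓝 ((((n : ℝ) - 1) / n) ^ 2 *
        ∑ k, ∑' j : ℕ, Real.log (p k (j + 1)) / (n : ℝ) ^ (j + 1))) := by
  -- Runs have positive length, so the values `p k 0` are irrelevant and may be set to `1`.
  wlog hp_zero : ∀ k, p k 0 = 1 generalizing p
  · set p' : Fin n → ℕ → ℝ := fun k => Function.update (p k) 0 1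
    have hp' (k j) (hj : 1 ≤ j) : p' k j = p k j :=
      Function.update_of_ne (Nat.one_le_iff_ne_zero.1 hj) _ _
    have hp'_succ (k j) : p' k (j + 1) = p k (j + 1) := hp' k _ (Nat.le_add_left 1 j)
    have := this (p := p') (fun k j hj => hp' k j hj ▸ hp k j hj)
      (by simpa only [hp'_succ] using hsum) fun k => Function.update_self _ _ _
    simpa only [hp'_succ, sWord, runProd_congr hp'] using this
  have hlim := tendsto_div_of_tendsto_sub_div_sub
    (a := fun q : ℕ => Real.log (sWord n p q) / (n : ℝ) ^ q) (b := Nat.cast)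
    Nat.strictMono_cast tendsto_natCast_atTop_atTop <| by
      simpa using tendsto_log_sWord_succ_sub hn hp_zero hp hsum
  exact hlim.congr fun q => by rw [div_div, mul_comm]

end RunProd

theorem stmt_8_general (n : ℕ) (hn : 2 ≤ n) (p : Fin n → ℕ → ℝ)
    (hp : ∀ k, ∀ j, 1 ≤ j → 0 < p k j)
    (hsum : ∀ k, Summable fun j : ℕ => Real.log (p k (j + 1)) / (n : ℝ) ^ (j + 1))
    (D : ℕ → ℝ)
    (hD : ∀ q, 1 ≤ q → D (q + 1) = ∏ j ∈ Finset.Icc 1 q, sWord n p j) :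
    Tendsto (fun q : ℕ => Real.log (D (q + 1)) / (q * (n : ℝ) ^ q)) atTop
      (𝓝 (((n : ℝ) - 1) / n *
        ∑ k, ∑' j : ℕ, Real.log (p k (j + 1)) / (n : ℝ) ^ (j + 1))) := by
  have hn_one : (1 : ℝ) < n := by exact_mod_cast hn
  have hn_sub : (n : ℝ) - 1 ≠ 0 := (sub_pos.2 hn_one).ne'
  have hp_ne (k j) (hj : 1 ≤ j) : p k j ≠ 0 := (hp k j hj).ne'
  have hlogD (q : ℕ) (hq : 1 ≤ q) :
      Real.log (D (q + 1)) = ∑ j ∈ Finset.Icc 1 q, Real.log (sWord n p j) := by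
    rw [hD q hq, Real.log_prod fun j _ => sWord_ne_zero hp_ne j]
  have hlim := tendsto_sum_Icc_div_mul_pow hn_one
    (tendsto_log_sWord_div (by omega) hp_ne hsum)
  convert hlim.congr' ?_ using 2
  · field_simp
  · filter_upwards [eventually_ge_atTop 1] with q hq
    rw [hlogD q hq]

/-- If `|log p(k,j)| ≤ C·j` for all `k, j ≥ 1`, then for each `k`
the series `E_n(k) = Σ_{j=1}^∞ (log p(k,j))/n^j` converges absolutely and, with
`D_{q+1} = ∏_{j=1}^q s_j`,
`lim_{q→∞} (log D_{q+1})/(q·n^q) = ((n-1)/n)·Σ_{k=1}^n E_n(k)`. -/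
theorem stmt_8 (n : ℕ) (hn : 2 ≤ n) (p : Fin n → ℕ → ℝ)
    (hp : ∀ k, ∀ j, 1 ≤ j → 0 < p k j)
    (C : ℝ) (hC : 0 < C)
    (hbound : ∀ k, ∀ j, 1 ≤ j → |Real.log (p k j)| ≤ C * j)
    (D : ℕ → ℝ)
    (hD : ∀ q, 1 ≤ q → D (q + 1) = ∏ j ∈ Finset.Icc 1 q, sWord n p j) :
    (∀ k, Summable (fun j : ℕ => |Real.log (p k (j + 1))| / (n : ℝ) ^ (j + 1))) ∧
    Tendsto (fun q : ℕ => Real.log (D (q + 1)) / (q * (n : ℝ) ^ q)) atTop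
      (nhds (((n : ℝ) - 1) / n *
        ∑ k, ∑' j : ℕ, Real.log (p k (j + 1)) / (n : ℝ) ^ (j + 1))) := by
  have habs (k) := summable_abs_div_pow_of_abs_le_mul (Nat.one_lt_cast.2 hn) (hbound k)
  exact ⟨habs, stmt_8_general n hn p hp (fun k => .of_abs (by simpa [abs_div] using habs k)) D hD⟩
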